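/- arXiv:1104.2755 — 2 statements merged into one kernel-verified Lean document; each statement's English description precedes it below -/
import Mathlib

section
/- Let X be a path-connected normal topological space which is an ENR, and let A ⊆ X × X be a closed subspace with TC_X(A) ≤ n. Then there exist open sets W₁, …, W_n in X × X such that A ⊆ W₁ ∪ ⋯ ∪ W_n and the free path fibration π : C([0,1],X) → X × X admits a continuous local section on each W_i. -/
open Set

/-- A continuous local section of the free path fibration `π : C([0,1],X) → X × X`,
`π(γ) = (γ 0, γ 1)`, over a subset `S ⊆ X × X`. -/
def PathSecOn (X : Type*) [TopologicalSpace X] (S : Set (X × X)) : Prop :=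
  ∃ s : C(S, C(unitInterval, X)),
    ∀ p : S, (s p) 0 = (p : X × X).1 ∧ (s p) 1 = (p : X × X).2

/-- Subspace topological complexity `TC_X(A)` for `A ⊆ X × X`, valued in `ℕ∞`:
the least `k` such that `A` is covered by `k` sets open in `A`, each admitting a
continuous local section of the free path fibration. -/
noncomputable def subTC (X : Type*) [TopologicalSpace X] (A : Set (X × X)) : ℕ∞ :=
  sInf {n : ℕ∞ | ∃ k : ℕ, n = k ∧ ∃ U : Fin k → Set (X × X),
    (∀ i, ∃ V, IsOpen V ∧ U i = V ∩ A) ∧ (A ⊆ ⋃ i, U i) ∧ ∀ i, PathSecOn X (U i)}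

/-- Topological complexity `TC(X) = TC_X(X × X)`. -/
noncomputable def TopComplexity (X : Type*) [TopologicalSpace X] : ℕ∞ :=
  subTC X Set.univ

/-- Subspace Lusternik–Schnirelmann category `cat_X(B)` for `B ⊆ X`, valued in `ℕ∞`:
the least `k` such that `B` is covered by `k` sets open in `B`, each of whose
inclusions into `X` is null-homotopic. -/
noncomputable def subCat (X : Type*) [TopologicalSpace X] (B : Set X) : ℕ∞ :=
  sInf {n : ℕ∞ | ∃ k : ℕ, n = k ∧ ∃ U : Fin k → Set X,
    (∀ i, ∃ V, IsOpen V ∧ U i = V ∩ B) ∧ (B ⊆ ⋃ i, U i) ∧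
    ∀ i, ∃ x₀ : X, ContinuousMap.Homotopic
      (⟨fun u : U i => (u : X), continuous_subtype_val⟩ : C(U i, X))
      (ContinuousMap.const _ x₀)}

/-- Lusternik–Schnirelmann category `cat(X) = cat_X(X)`. -/
noncomputable def LSCat (X : Type*) [TopologicalSpace X] : ℕ∞ :=
  subCat X Set.univ

/-- `X` is an ENR: it embeds in some `ℝ^N` as a retract of an open set. -/
def IsENR (X : Type*) [TopologicalSpace X] : Prop :=
  ∃ (N : ℕ) (e : X → (Fin N → ℝ)) (O : Set (Fin N → ℝ)) (r : C(O, Fin N → ℝ)),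
    Topology.IsEmbedding e ∧ IsOpen O ∧ Set.range e ⊆ O ∧
    (∀ z : O, r z ∈ Set.range e) ∧ (∀ z : O, (z : Fin N → ℝ) ∈ Set.range e → r z = (z : Fin N → ℝ))

/-!
Let `s` be a local section over `S ⊆ X × X`, where `X` is a retract of an open subset `O` of a
locally convex space. For `y` close to `q ∈ S`, the path `s q`, corrected by an affine path
so as to run from `y.1` to `y.2`, is a path in `O` close to `s q`. Paths in the ambient space with
prescribed endpoints form a convex set, so finitely many such corrected paths can be averaged with a
partition of unity in `y`; retracting the average to `X` gives a section over a neighbourhood of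
`S`. The averages stay in `O` because, among finitely many `q` near `y`, the one with the largest
radius of control sees all the others.
-/

section ConvexSelection

theorem convexHull_image_subset_iUnion {𝕜 ι α E : Type*} [Field 𝕜] [LinearOrder 𝕜]
    [IsStrictOrderedRing 𝕜] [LinearOrder α] [AddCommGroup E] [Module 𝕜 E]
    (r : ι → α) (f : ι → E) (B : ι → Set E) (T : Set ι)
    (hB : ∀ i ∈ T, Convex 𝕜 (B i)) (hf : ∀ i ∈ T, ∀ j ∈ T, r j ≤ r i → f j ∈ B i) :
    convexHull 𝕜 (f '' T) ⊆ ⋃ i ∈ T, B i := by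
  classical
  rw [convexHull_eq_union_convexHull_finite_subsets]
  refine iUnion₂_subset fun t ht x hx ↦ ?_
  obtain ⟨F, hFT, rfl⟩ := Finset.subset_set_image_iff.1 ht
  have hF : F.Nonempty := by
    simpa using (convexHull_nonempty_iff (𝕜 := 𝕜)).1 ⟨x, hx⟩
  obtain ⟨i, hiF, hmax⟩ := F.exists_max_image r hF
  have hsub : (F.image f : Set E) ⊆ B i := by
    simpa [subset_def] using fun j hj ↦ hf i (hFT hiF) j (hFT hj) (hmax j hj)
  exact mem_biUnion (hFT hiF) (convexHull_min hsub (hB i (hFT hiF)) hx)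

variable {Z E : Type*} [AddCommGroup E] [Module ℝ E] [TopologicalSpace E]

theorem exists_ball_forall_mem_convex [PseudoMetricSpace Z] [LocallyConvexSpace ℝ E] {S : Set Z}
    {Φ : Z → S → E} {U : Set E} (hU : IsOpen U) {q : S}
    (hΦ : ContinuousAt (Function.uncurry Φ) (q, q)) (hq : Φ q q ∈ U) :
    ∃ r > 0, ∃ B ⊆ U, Convex ℝ B ∧
      ∀ y : Z, dist y q < r → ∀ q' : S, dist q' q < r → Φ y q' ∈ B := by
  obtain ⟨B, ⟨hB, hBconv⟩, hBU⟩ :=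
    (LocallyConvexSpace.convex_basis (𝕜 := ℝ) (Φ q q)).mem_iff.1 (hU.mem_nhds hq)
  obtain ⟨r, hr, hrB⟩ := Metric.mem_nhds_iff.1 (hΦ hB)
  exact ⟨r, hr, B, hBU, hBconv, fun y hy q' hq' ↦
    hrB (show (y, q') ∈ Metric.ball ((q : Z), q) r from max_lt hy hq')⟩

theorem exists_isOpen_exists_continuousMap_mem_convexHull [TopologicalSpace Z]
    [TopologicalSpace.PseudoMetrizableSpace Z] [IsTopologicalAddGroup E] [ContinuousSMul ℝ E]
    [LocallyConvexSpace ℝ E] {S : Set Z} {Φ : Z → S → E} (hΦ : Continuous (Function.uncurry Φ))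
    {U : Set E} (hU : IsOpen U) (hS : ∀ q : S, Φ q q ∈ U) :
    ∃ W : Set Z, IsOpen W ∧ S ⊆ W ∧
      ∃ g : C(W, E), ∀ y : W, g y ∈ U ∧ g y ∈ convexHull ℝ (range (Φ y)) := by
  let := TopologicalSpace.pseudoMetrizableSpacePseudoMetric Z
  choose r hr B hBU hB hΦB using fun q : S ↦
    exists_ball_forall_mem_convex hU hΦ.continuousAt (hS q)
  let W : Set Z := ⋃ q : S, Metric.ball (q : Z) (r q / 2)
  let T (y : Z) : Set S := {q | dist y q < r q / 2}
  have hull_subset (y : Z) : convexHull ℝ (Φ y '' T y) ⊆ U := by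
    refine (convexHull_image_subset_iUnion r (Φ y) B (T y) (fun q _ ↦ hB q) ?_).trans
      (iUnion₂_subset fun q _ ↦ hBU q)
    intro q (hq : dist y q < r q / 2) q' (hq' : dist y q' < r q' / 2) hle
    have hqq' : dist q' q < r q := calc
      dist (q' : Z) q ≤ dist y q' + dist y q := dist_triangle_left _ _ _
      _ < r q := by linarith
    exact hΦB q y (by linarith [hr q]) q' hqq'
  have local_selection (y : W) : ∃ N ∈ nhds y, ∃ g : W → E,
      ContinuousOn g N ∧ ∀ z ∈ N, g z ∈ convexHull ℝ (Φ z '' T z) := by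
    obtain ⟨q, hq⟩ := mem_iUnion.1 y.2
    refine ⟨Subtype.val ⁻¹' Metric.ball (q : Z) (r q / 2),
      (Metric.isOpen_ball.preimage continuous_subtype_val).mem_nhds hq, fun z ↦ Φ z q, ?_,
      fun z hz ↦ subset_convexHull ℝ _ (mem_image_of_mem _ hz)⟩
    exact (hΦ.comp (continuous_subtype_val.prodMk continuous_const)).continuousOn
  obtain ⟨g, hg⟩ := exists_continuous_forall_mem_convex_of_local
    (fun y : W ↦ convex_convexHull ℝ (Φ y '' T y)) local_selection
  exact ⟨W, isOpen_iUnion fun _ ↦ Metric.isOpen_ball,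
    fun q hq ↦ mem_iUnion.2 ⟨⟨q, hq⟩, Metric.mem_ball_self (half_pos (hr _))⟩,
    g, fun y ↦ ⟨hull_subset y (hg y), convexHull_mono (image_subset_range _ _) (hg y)⟩⟩

end ConvexSelection

section Endpoints

variable {V : Type*} [AddCommGroup V] [Module ℝ V] [TopologicalSpace V]

theorem convex_setOf_endpoints_eq [ContinuousAdd V] [ContinuousConstSMul ℝ V] (a b : V) :
    Convex ℝ {γ : C(unitInterval, V) | γ 0 = a ∧ γ 1 = b} := by
  rintro γ ⟨hγ₀, hγ₁⟩ δ ⟨hδ₀, hδ₁⟩ c d - - hcd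
  simp [hγ₀, hγ₁, hδ₀, hδ₁, Convex.combo_self hcd]

variable [IsTopologicalAddGroup V] [ContinuousSMul ℝ V]

/-- The path `γ` in a topological vector space, moved to have endpoints `a` and `b` by adding the
affine path between the two endpoint defects. It turns a path over one pair of points into a path
over a nearby pair, without changing it when the endpoints are already right. -/
def withEndpoints (γ : C(unitInterval, V)) (a b : V) : C(unitInterval, V) where
  toFun t := γ t + AffineMap.lineMap (a - γ 0) (b - γ 1) (t : ℝ)
  continuous_toFun := γ.continuous.add
    (continuous_const.lineMap continuous_const continuous_subtype_val)

@[simp]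
theorem withEndpoints_zero (γ : C(unitInterval, V)) (a b : V) : withEndpoints γ a b 0 = a := by
  simp [withEndpoints]

@[simp]
theorem withEndpoints_one (γ : C(unitInterval, V)) (a b : V) : withEndpoints γ a b 1 = b := by
  simp [withEndpoints]

theorem withEndpoints_self (γ : C(unitInterval, V)) : withEndpoints γ (γ 0) (γ 1) = γ := by
  ext t
  simp [withEndpoints]

@[fun_prop]
theorem continuous_withEndpoints {Y : Type*} [TopologicalSpace Y] {γ : Y → C(unitInterval, V)}
    {a b : Y → V} (hγ : Continuous γ) (ha : Continuous a) (hb : Continuous b) :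
    Continuous fun y ↦ withEndpoints (γ y) (a y) (b y) := by
  refine ContinuousMap.continuous_of_continuous_uncurry _ (Continuous.add (by fun_prop) ?_)
  exact Continuous.lineMap (by fun_prop) (by fun_prop) (by fun_prop)

end Endpoints

section PathSections

variable {X : Type*} [TopologicalSpace X]

theorem pathSecOn_empty : PathSecOn X ∅ :=
  ⟨⟨fun p ↦ p.2.elim, continuous_of_const fun p ↦ p.2.elim⟩, fun p ↦ p.2.elim⟩

theorem PathSecOn.exists_isOpen_superset_of_retract {V : Type*} [AddCommGroup V] [Module ℝ V]
    [TopologicalSpace V] [IsTopologicalAddGroup V] [ContinuousSMul ℝ V] [LocallyConvexSpace ℝ V]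
    [TopologicalSpace.PseudoMetrizableSpace X] {O : Set V} (hO : IsOpen O) (ι : C(X, O))
    (ρ : C(O, X)) (hρ : Function.LeftInverse ρ ι) {S : Set (X × X)} (hS : PathSecOn X S) :
    ∃ W : Set (X × X), IsOpen W ∧ S ⊆ W ∧ PathSecOn X W := by
  obtain ⟨s, hs⟩ := hS
  let e : C(X, V) := ⟨fun x ↦ ι x, by fun_prop⟩
  let Φ (y : X × X) (q : S) : C(unitInterval, V) := withEndpoints (e.comp (s q)) (e y.1) (e y.2)
  have hΦ : Continuous (Function.uncurry Φ) := by
    dsimp only [Function.uncurry_def, Φ]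
    fun_prop
  have hΦ_self (q : S) : Φ q q = e.comp (s q) := by
    simpa [hs q] using withEndpoints_self (e.comp (s q))
  obtain ⟨W, hW, hSW, g, hg⟩ := exists_isOpen_exists_continuousMap_mem_convexHull hΦ
    (ContinuousMap.isOpen_setOfPred_mapsTo isCompact_univ hO)
    fun q ↦ by
      rw [hΦ_self]
      exact fun t _ ↦ (ι (s q t)).2
  have hg_ends (y : W) : g y 0 = e y.1.1 ∧ g y 1 = e y.1.2 :=
    convexHull_min (range_subset_iff.2 fun q ↦ by simp [Φ])
      (convex_setOf_endpoints_eq (e y.1.1) (e y.1.2)) (hg y).2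
  let F : C(W × unitInterval, X) :=
    ρ.comp ⟨fun p ↦ ⟨g p.1 p.2, (hg p.1).1 (mem_univ p.2)⟩, by fun_prop⟩
  have hF (y : W) (t : unitInterval) (x : X) (h : g y t = e x) : F (y, t) = x :=
    (congrArg ρ (Subtype.ext h)).trans (hρ x)
  exact ⟨W, hW, hSW, F.curry, fun y ↦ ⟨hF y 0 _ (hg_ends y).1, hF y 1 _ (hg_ends y).2⟩⟩

theorem IsENR.exists_retraction (hX : IsENR X) :
    ∃ (N : ℕ) (O : Set (Fin N → ℝ)) (ι : C(X, O)) (ρ : C(O, X)),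
      IsOpen O ∧ Function.LeftInverse ρ ι := by
  obtain ⟨N, e, O, r, he, hO, heO, hr, hr_id⟩ := hX
  choose ρ hρ using hr
  have hρ_cont : Continuous ρ := by
    simpa only [he.continuous_iff, Function.comp_def, hρ] using r.continuous
  refine ⟨N, O, ⟨fun x ↦ ⟨e x, heO (mem_range_self x)⟩, he.continuous.subtype_mk _⟩,
    ⟨ρ, hρ_cont⟩, hO, fun x ↦ he.injective ?_⟩
  exact (hρ _).trans (hr_id _ (mem_range_self x))

theorem PathSecOn.exists_isOpen_superset (hX : IsENR X) {S : Set (X × X)} (hS : PathSecOn X S) :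
    ∃ W : Set (X × X), IsOpen W ∧ S ⊆ W ∧ PathSecOn X W := by
  obtain ⟨N, O, ι, ρ, hO, hρ⟩ := hX.exists_retraction
  have : TopologicalSpace.MetrizableSpace X :=
    (hρ.isEmbedding ρ.continuous ι.continuous).metrizableSpace
  exact hS.exists_isOpen_superset_of_retract hO ι ρ hρ

theorem exists_pathSecOn_cover_of_subTC_le {A : Set (X × X)} {n : ℕ} (h : subTC X A ≤ n) :
    ∃ U : Fin n → Set (X × X), A ⊆ ⋃ i, U i ∧ ∀ i, PathSecOn X (U i) := by
  obtain ⟨_, ⟨k, rfl, U, -, hAU, hU⟩, hk⟩ :=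
    sInf_lt_iff.1 (h.trans_lt (ENat.natCast_lt_natCast.2 n.lt_succ_self))
  obtain ⟨m, rfl⟩ := Nat.exists_eq_add_of_le (Nat.lt_succ_iff.1 (ENat.natCast_lt_natCast.1 hk))
  refine ⟨Fin.append U fun _ ↦ ∅, fun p hp ↦ ?_, Fin.addCases ?_ ?_⟩
  · obtain ⟨i, hi⟩ := mem_iUnion.1 (hAU hp)
    exact mem_iUnion.2 ⟨Fin.castAdd m i, by simpa only [Fin.append_left] using hi⟩
  · simpa only [Fin.append_left] using hU
  · simpa only [Fin.append_right] using fun _ ↦ pathSecOn_empty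

theorem exists_open_cover_of_closed_subTC_le_general (hX : IsENR X) (A : Set (X × X)) (n : ℕ)
    (hTC : subTC X A ≤ n) :
    ∃ W : Fin n → Set (X × X),
      (∀ i, IsOpen (W i)) ∧ A ⊆ ⋃ i, W i ∧ ∀ i, PathSecOn X (W i) := by
  obtain ⟨U, hAU, hU⟩ := exists_pathSecOn_cover_of_subTC_le hTC
  choose W hW hUW hWsec using fun i ↦ (hU i).exists_isOpen_superset hX
  exact ⟨W, hW, hAU.trans (iUnion_mono hUW), hWsec⟩

end PathSections

/-- If `X` is a path-connected normal ENR and `A ⊆ X × X` is closed with `TC_X(A) ≤ n`,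
then there are `n` open subsets of `X × X` covering `A`, each admitting a continuous
local section of the free path fibration. -/
theorem exists_open_cover_of_closed_subTC_le {X : Type*} [TopologicalSpace X]
    [PathConnectedSpace X] [NormalSpace X] (hX : IsENR X)
    (A : Set (X × X)) (hA : IsClosed A) (n : ℕ) (hTC : subTC X A ≤ (n : ℕ∞)) :
    ∃ W : Fin n → Set (X × X),
      (∀ i, IsOpen (W i)) ∧ A ⊆ ⋃ i, W i ∧ ∀ i, PathSecOn X (W i) := by
  exact exists_open_cover_of_closed_subTC_le_general hX A n hTC
end

section
/- Let X be a path-connected normal ENR, let Y be a paracompact space with covering dimension dim(Y) ≤ k, and let q : X × X → Y be a closed continuous map such that every fibre q⁻¹(y) has covering dimension at most m. Then TC(X) ≤ (k + 1)(m + 1). -/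
open Set

/-- `Y` has covering dimension at most `k`: every open cover of `Y` admits an open
refinement covering `Y` in which every point lies in at most `k + 1` members. -/
def CovDimLE (Y : Type*) [TopologicalSpace Y] (k : ℕ) : Prop :=
  ∀ 𝒰 : Set (Set Y), (∀ U ∈ 𝒰, IsOpen U) → ⋃₀ 𝒰 = Set.univ →
    ∃ 𝒱 : Set (Set Y), (∀ V ∈ 𝒱, IsOpen V) ∧ ⋃₀ 𝒱 = Set.univ ∧
      (∀ V ∈ 𝒱, ∃ U ∈ 𝒰, V ⊆ U) ∧
      ∀ y : Y, {V ∈ 𝒱 | y ∈ V}.Finite ∧ {V ∈ 𝒱 | y ∈ V}.ncard ≤ k + 1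

/-!
Carrying a local section of the path fibration is inherited by subsets and by disjoint unions of
open sets, and such sections exist near every point of `X × X`, since an ENR is locally
contractible. By Ostrand's theorem, every open cover of a normal paracompact space of dimension at
most `m` is refined by an open cover that splits into `m + 1` families of pairwise disjoint sets.
Hence each fibre of `q` is covered by `m + 1` open sets with sections and, as `q` is closed, so is
the preimage of a neighbourhood of the point below it. Ostrand's theorem in `Y` splits a refinement
of these neighbourhoods into `k + 1` disjoint families; over the union of each of them `m + 1` open
sets suffice.
-/

open Topology Function

/-- A family `𝒲` of pairwise disjoint open sets refining `𝒰`. It need not cover the space: Ostrand's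
theorem provides finitely many such families that do so together. -/
structure IsDisjointOpenRefinement {Z : Type*} [TopologicalSpace Z] (𝒲 𝒰 : Set (Set Z)) : Prop where
  isOpen : ∀ V ∈ 𝒲, IsOpen V
  exists_subset : ∀ V ∈ 𝒲, ∃ U ∈ 𝒰, V ⊆ U
  pairwiseDisjoint : 𝒲.PairwiseDisjoint id

section Ostrand

variable {ι Y : Type*} [TopologicalSpace Y]

/-- The set of points at which the functions indexed by `I` are positive and strictly larger than
all the others. When the `f i` are the barycentric coordinates of a map to a simplicial complex,
this is the preimage of the open star, in the barycentric subdivision, of the barycentre of the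
face `I`; the stars of faces of the same dimension are disjoint, which yields Ostrand's theorem. -/
def dominanceSet (f : ι → C(Y, ℝ)) (I : Finset ι) : Set Y :=
  {y | ∀ i ∈ I, 0 < f i y ∧ ∀ j ∉ I, f j y < f i y}

theorem isOpen_dominanceSet {f : ι → C(Y, ℝ)} (hf : LocallyFinite fun i ↦ support (f i))
    (I : Finset ι) : IsOpen (dominanceSet f I) := by
  let C (i j : ι) : Set Y := closure (support (f j)) ∩ {y | j ∉ I ∧ f i y ≤ f j y}
  have hC (i : ι) : IsClosed (⋃ j, C i j) :=
    (hf.closure.subset fun _ ↦ inter_subset_left).isClosed_iUnion fun j ↦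
      isClosed_closure.inter (isClosed_const.inter (isClosed_le (f i).continuous (f j).continuous))
  have heq : dominanceSet f I = ⋂ i ∈ I, {y | 0 < f i y} \ ⋃ j, C i j := by
    ext y
    simp only [dominanceSet, C, mem_ofPred_eq, mem_iInter, mem_sdiff, mem_iUnion, mem_inter_iff,
      not_exists, not_and, not_le]
    refine forall₂_congr fun i _ ↦ and_congr_right fun hi ↦
      ⟨fun h j _ hj ↦ h j hj, fun h j hj ↦ ?_⟩
    by_contra! hij
    exact hij.not_gt (h j (subset_closure (hi.trans_le hij).ne') hj)
  rw [heq]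
  exact isOpen_biInter_finset fun i _ ↦ (isOpen_lt continuous_const (f i).continuous).sdiff (hC i)

theorem disjoint_dominanceSet (f : ι → C(Y, ℝ)) {I J : Finset ι} (hcard : I.card = J.card)
    (hne : I ≠ J) : Disjoint (dominanceSet f I) (dominanceSet f J) := by
  obtain ⟨i, hiI, hiJ⟩ :=
    Finset.not_subset.1 fun h ↦ hne (Finset.eq_of_subset_of_card_le h hcard.ge)
  obtain ⟨j, hjJ, hjI⟩ :=
    Finset.not_subset.1 fun h ↦ hne (Finset.eq_of_subset_of_card_le h hcard.le).symm
  exact disjoint_left.2 fun y hI hJ ↦ lt_asymm ((hI i hiI).2 j hjI) ((hJ j hjJ).2 i hiJ)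

theorem mem_dominanceSet_toFinset (f : ι → C(Y, ℝ)) {y : Y} (hy : {i | 0 < f i y}.Finite) :
    y ∈ dominanceSet f hy.toFinset := by
  simp only [dominanceSet, Finite.mem_toFinset, mem_ofPred_eq, not_lt]
  exact fun i hi ↦ ⟨hi, fun j hj ↦ hj.trans_lt hi⟩

theorem isDisjointOpenRefinement_dominanceSet {f : ι → C(Y, ℝ)} {𝒰 : Set (Set Y)}
    (hf : LocallyFinite fun i ↦ support (f i)) (h𝒰 : ∀ i, ∃ U ∈ 𝒰, {y | 0 < f i y} ⊆ U) (n : ℕ) :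
    IsDisjointOpenRefinement (dominanceSet f '' {I | I.card = n + 1}) 𝒰 where
  isOpen := by
    rintro _ ⟨I, -, rfl⟩
    exact isOpen_dominanceSet hf I
  exists_subset := by
    rintro _ ⟨I, hI, rfl⟩
    obtain ⟨i, hi⟩ : I.Nonempty := Finset.card_pos.1 (hI.symm ▸ n.succ_pos)
    obtain ⟨U, hU, hsub⟩ := h𝒰 i
    exact ⟨U, hU, fun y hy ↦ hsub (hy i hi).1⟩
  pairwiseDisjoint := by
    rintro _ ⟨I, hI, rfl⟩ _ ⟨J, hJ, rfl⟩ hne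
    exact disjoint_dominanceSet f (hI.trans hJ.symm) (ne_of_apply_ne _ hne)

theorem CovDimLE.exists_disjoint_refinements [NormalSpace Y] [ParacompactSpace Y] {k : ℕ}
    (hY : CovDimLE Y k) {𝒰 : Set (Set Y)} (hopen : ∀ U ∈ 𝒰, IsOpen U) (hcover : ⋃₀ 𝒰 = univ) :
    ∃ 𝒲 : Fin (k + 1) → Set (Set Y),
      (∀ i, IsDisjointOpenRefinement (𝒲 i) 𝒰) ∧ ⋃ i, ⋃₀ 𝒲 i = univ := by
  obtain ⟨𝒱, h𝒱open, h𝒱cover, h𝒱𝒰, h𝒱card⟩ := hY 𝒰 hopen hcover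
  obtain ⟨f, hf⟩ := PartitionOfUnity.exists_isSubordinate isClosed_univ
    (fun V : 𝒱 ↦ (V : Set Y)) (fun V ↦ h𝒱open V V.2) (by rw [← sUnion_eq_iUnion, h𝒱cover])
  have hpos (V : 𝒱) : {y | 0 < f V y} ⊆ V := fun y hy ↦ hf V (subset_tsupport _ hy.ne')
  refine ⟨fun i ↦ dominanceSet (fun V ↦ f V) '' {I | I.card = i + 1}, fun i ↦
    isDisjointOpenRefinement_dominanceSet f.locallyFinite (fun V ↦ ?_) i,
    eq_univ_of_forall fun y ↦ ?_⟩
  · obtain ⟨U, hU, hVU⟩ := h𝒱𝒰 V V.2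
    exact ⟨U, hU, (hpos V).trans hVU⟩
  · obtain ⟨hfinite, hcard⟩ := h𝒱card y
    have himage : Subtype.val '' {V : 𝒱 | 0 < f V y} ⊆ {V ∈ 𝒱 | y ∈ V} := by
      rintro _ ⟨V, hV, rfl⟩
      exact ⟨V.2, hpos V hV⟩
    have hfin : {V : 𝒱 | 0 < f V y}.Finite :=
      (hfinite.subset himage).of_finite_image Subtype.val_injective.injOn
    have hle : hfin.toFinset.card ≤ k + 1 := by
      rw [← ncard_eq_toFinset_card _ hfin, ← ncard_image_of_injective _ Subtype.val_injective]
      exact (ncard_le_ncard himage hfinite).trans hcard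
    have hge : 0 < hfin.toFinset.card := by
      obtain ⟨V, hV⟩ := f.exists_pos (mem_univ y)
      exact Finset.card_pos.2 ⟨V, hfin.mem_toFinset.2 hV⟩
    exact mem_iUnion.2 ⟨⟨hfin.toFinset.card - 1, by omega⟩, _,
      ⟨hfin.toFinset, (Nat.sub_add_cancel hge).symm, rfl⟩, mem_dominanceSet_toFinset _ hfin⟩

end Ostrand

theorem CovDimLE.of_isClosedEmbedding {Y Z : Type*} [TopologicalSpace Y] [TopologicalSpace Z]
    {k : ℕ} (hY : CovDimLE Y k) {f : Z → Y} (hf : IsClosedEmbedding f) : CovDimLE Z k := by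
  intro 𝒰 hopen hcover
  obtain ⟨𝒱, h𝒱open, h𝒱cover, h𝒱sub, h𝒱card⟩ :=
    hY ({O | IsOpen O ∧ f ⁻¹' O ∈ 𝒰} ∪ {(range f)ᶜ})
      (by
        rintro V (hV | rfl)
        exacts [hV.1, hf.isClosed_range.isOpen_compl])
      (by
        refine eq_univ_of_forall fun y ↦ ?_
        by_cases hy : y ∈ range f
        · obtain ⟨z, rfl⟩ := hy
          obtain ⟨U, hU, hzU⟩ : z ∈ ⋃₀ 𝒰 := hcover ▸ mem_univ z
          obtain ⟨O, hO, rfl⟩ := hf.isInducing.isOpen_iff.1 (hopen U hU)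
          exact ⟨O, .inl ⟨hO, hU⟩, hzU⟩
        · exact ⟨_, .inr rfl, hy⟩)
  refine ⟨preimage f '' {V ∈ 𝒱 | (f ⁻¹' V).Nonempty}, ?_, ?_, ?_, fun z ↦ ?_⟩
  · rintro _ ⟨V, hV, rfl⟩
    exact (h𝒱open V hV.1).preimage hf.continuous
  · refine eq_univ_of_forall fun z ↦ ?_
    obtain ⟨V, hV, hzV⟩ : f z ∈ ⋃₀ 𝒱 := h𝒱cover ▸ mem_univ (f z)
    exact ⟨_, ⟨V, ⟨hV, z, hzV⟩, rfl⟩, hzV⟩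
  · rintro _ ⟨V, ⟨hV, z, hzV⟩, rfl⟩
    obtain ⟨O, hO | rfl, hVO⟩ := h𝒱sub V hV
    · exact ⟨_, hO.2, preimage_mono hVO⟩
    · exact absurd (mem_range_self z) (hVO hzV)
  · obtain ⟨hfinite, hcard⟩ := h𝒱card (f z)
    have hsub : {W ∈ preimage f '' {V ∈ 𝒱 | (f ⁻¹' V).Nonempty} | z ∈ W} ⊆
        preimage f '' {V ∈ 𝒱 | f z ∈ V} := by
      rintro _ ⟨⟨V, hV, rfl⟩, hzV⟩
      exact ⟨V, ⟨hV.1, hzV⟩, rfl⟩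
    have hfinite_image := hfinite.image (preimage f)
    exact ⟨hfinite_image.subset hsub,
      (ncard_le_ncard hsub hfinite_image).trans ((ncard_image_le hfinite).trans hcard)⟩

section OpenExtension

variable {Z : Type*} {F : Set Z}

/-- The points of `Z` that are strictly closer to `V` than to the rest of `F`. This is Kuratowski's
extension of a relatively open subset `V` of `F` to an open subset of `Z`, which keeps disjoint sets
disjoint. -/
def openExtension [PseudoEMetricSpace Z] (V : Set F) : Set Z :=
  {z | Metric.infEDist z (Subtype.val '' V) < Metric.infEDist z (Subtype.val '' Vᶜ)}

theorem isOpen_openExtension [PseudoEMetricSpace Z] (V : Set F) : IsOpen (openExtension V) :=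
  isOpen_lt Metric.continuous_infEDist Metric.continuous_infEDist

theorem disjoint_openExtension [PseudoEMetricSpace Z] {V W : Set F} (h : Disjoint V W) :
    Disjoint (openExtension V) (openExtension W) := by
  refine disjoint_left.2 fun z hzV hzW ↦ lt_irrefl (Metric.infEDist z (Subtype.val '' V)) ?_
  calc
    _ < Metric.infEDist z (Subtype.val '' Vᶜ) := hzV
    _ ≤ Metric.infEDist z (Subtype.val '' W) :=
      Metric.infEDist_anti (image_mono h.subset_compl_left)
    _ < Metric.infEDist z (Subtype.val '' Wᶜ) := hzW
    _ ≤ Metric.infEDist z (Subtype.val '' V) :=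
      Metric.infEDist_anti (image_mono h.subset_compl_right)

theorem coe_mem_openExtension [PseudoEMetricSpace Z] {V : Set F} (hV : IsOpen V) {z : F}
    (hz : z ∈ V) : (z : Z) ∈ openExtension V := by
  have hnotMem : (z : Z) ∉ closure (Subtype.val '' Vᶜ) := by
    rwa [← closure_subtype, hV.isClosed_compl.closure_eq, notMem_compl_iff]
  calc
    Metric.infEDist (z : Z) (Subtype.val '' V) = 0 :=
      Metric.infEDist_zero_of_mem (mem_image_of_mem _ hz)
    _ < Metric.infEDist (z : Z) (Subtype.val '' Vᶜ) :=
      Metric.infEDist_pos_iff_notMem_closure.2 hnotMem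

theorem IsDisjointOpenRefinement.exists_extension [PseudoEMetricSpace Z] {𝒱 : Set (Set F)}
    {𝒰 : Set (Set Z)} (h𝒱 : IsDisjointOpenRefinement 𝒱 (preimage Subtype.val '' 𝒰))
    (hopen : ∀ U ∈ 𝒰, IsOpen U) :
    ∃ 𝒲, IsDisjointOpenRefinement 𝒲 𝒰 ∧ Subtype.val '' ⋃₀ 𝒱 ⊆ ⋃₀ 𝒲 := by
  have hsub (V : 𝒱) : ∃ U ∈ 𝒰, (V : Set F) ⊆ Subtype.val ⁻¹' U := by
    simpa using h𝒱.exists_subset V V.2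
  choose U hU hVU using hsub
  refine ⟨range fun V : 𝒱 ↦ openExtension (V : Set F) ∩ U V, ⟨?_, ?_, ?_⟩, ?_⟩
  · rintro _ ⟨V, rfl⟩
    exact (isOpen_openExtension _).inter (hopen _ (hU V))
  · rintro _ ⟨V, rfl⟩
    exact ⟨U V, hU V, inter_subset_right⟩
  · rintro _ ⟨V, rfl⟩ _ ⟨W, rfl⟩ hne
    have hVW : (V : Set F) ≠ W := fun h ↦ hne (by rw [Subtype.ext h])
    exact (disjoint_openExtension (h𝒱.pairwiseDisjoint V.2 W.2 hVW)).mono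
      inter_subset_left inter_subset_left
  · rintro _ ⟨z, ⟨V, hV, hzV⟩, rfl⟩
    exact ⟨_, ⟨⟨V, hV⟩, rfl⟩, coe_mem_openExtension (h𝒱.isOpen V hV) hzV, hVU ⟨V, hV⟩ hzV⟩

theorem CovDimLE.exists_disjoint_refinements_of_subset [TopologicalSpace Z]
    [TopologicalSpace.PseudoMetrizableSpace Z] {m : ℕ} (hF : CovDimLE F m) {𝒰 : Set (Set Z)}
    (hopen : ∀ U ∈ 𝒰, IsOpen U) (hcover : F ⊆ ⋃₀ 𝒰) :
    ∃ 𝒲 : Fin (m + 1) → Set (Set Z),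
      (∀ i, IsDisjointOpenRefinement (𝒲 i) 𝒰) ∧ F ⊆ ⋃ i, ⋃₀ 𝒲 i := by
  let _ := TopologicalSpace.pseudoMetrizableSpacePseudoMetric Z
  obtain ⟨𝒱, h𝒱, h𝒱cover⟩ := hF.exists_disjoint_refinements
    (𝒰 := preimage Subtype.val '' 𝒰)
    (by
      rintro _ ⟨U, hU, rfl⟩
      exact (hopen U hU).preimage continuous_subtype_val)
    (by
      refine eq_univ_of_forall fun z ↦ ?_
      obtain ⟨U, hU, hzU⟩ := hcover z.2
      exact ⟨_, ⟨U, hU, rfl⟩, hzU⟩)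
  choose 𝒲 h𝒲 h𝒱𝒲 using fun i ↦ (h𝒱 i).exists_extension hopen
  refine ⟨𝒲, h𝒲, fun z hz ↦ ?_⟩
  obtain ⟨i, hi⟩ := mem_iUnion.1 (h𝒱cover ▸ mem_univ (⟨z, hz⟩ : F))
  exact mem_iUnion.2 ⟨i, h𝒱𝒲 i ⟨_, hi, rfl⟩⟩

end OpenExtension

theorem normalSpace_of_isClosedMap_surjective {Y Z : Type*} [TopologicalSpace Y]
    [TopologicalSpace Z] [NormalSpace Z] {q : Z → Y} (hcont : Continuous q)
    (hclosed : IsClosedMap q) (hsurj : Surjective q) : NormalSpace Y where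
  normal s t hs ht hst := by
    obtain ⟨u, v, hu, hv, hsu, htv, huv⟩ :=
      normal_separation (hs.preimage hcont) (ht.preimage hcont) (hst.preimage q)
    refine ⟨kernImage q u, kernImage q v, isClosedMap_iff_kernImage.1 hclosed hu,
      isClosedMap_iff_kernImage.1 hclosed hv, subset_kernImage_iff.2 hsu,
      subset_kernImage_iff.2 htv, disjoint_left.2 fun y hyu hyv ↦ ?_⟩
    obtain ⟨z, rfl⟩ := hsurj y
    exact disjoint_left.1 huv (hyu rfl) (hyv rfl)

/-- A property of subsets inherited by subsets and by disjoint unions of open sets. Having a local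
section of a given map is such a property, and the covering arguments need to know no more about the
path fibration. -/
structure IsDisjointlyAdditive {Z : Type*} [TopologicalSpace Z] (P : Set Z → Prop) : Prop where
  mono : ∀ ⦃S T⦄, P T → S ⊆ T → P S
  sUnion : ∀ ⦃𝒲 : Set (Set Z)⦄, (∀ V ∈ 𝒲, IsOpen V) → 𝒲.PairwiseDisjoint id →
    (∀ V ∈ 𝒲, P V) → P (⋃₀ 𝒲)

/-- `A` is covered by `n` open sets satisfying `P`. The open sets are open in the whole space rather
than in `A`, so that they also cover a neighbourhood of `A`. -/
def OpenCoverable {Z : Type*} [TopologicalSpace Z] (P : Set Z → Prop) (n : ℕ) (A : Set Z) : Prop :=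
  ∃ U : Fin n → Set Z, (∀ i, IsOpen (U i)) ∧ (∀ i, P (U i)) ∧ A ⊆ ⋃ i, U i

section OpenCoverable

variable {Y Z : Type*} [TopologicalSpace Y] [TopologicalSpace Z] {P : Set Z → Prop} {n : ℕ}

theorem OpenCoverable.mono {A B : Set Z} (hB : OpenCoverable P n B) (hAB : A ⊆ B) :
    OpenCoverable P n A := by
  obtain ⟨U, hopen, hP, hcover⟩ := hB
  exact ⟨U, hopen, hP, hAB.trans hcover⟩

theorem OpenCoverable.iUnion_fin {k : ℕ} {A : Fin k → Set Z} (hA : ∀ j, OpenCoverable P n (A j)) :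
    OpenCoverable P (k * n) (⋃ j, A j) := by
  choose U hopen hP hcover using hA
  refine ⟨fun i ↦ U (finProdFinEquiv.symm i).1 (finProdFinEquiv.symm i).2, fun _ ↦ hopen _ _,
    fun _ ↦ hP _ _, iUnion_subset fun j ↦ (hcover j).trans (iUnion_subset fun i ↦ ?_)⟩
  exact subset_iUnion_of_subset (finProdFinEquiv (j, i)) (by simp)

theorem OpenCoverable.exists_isOpen_preimage {q : Z → Y} (hq : IsClosedMap q) {y : Y}
    (hy : OpenCoverable P n (q ⁻¹' {y})) :
    ∃ V, IsOpen V ∧ y ∈ V ∧ OpenCoverable P n (q ⁻¹' V) := by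
  obtain ⟨U, hopen, hP, hcover⟩ := hy
  exact ⟨kernImage q (⋃ i, U i), isClosedMap_iff_kernImage.1 hq (isOpen_iUnion hopen),
    fun _ hz ↦ hcover hz, U, hopen, hP, subset_kernImage_iff.1 Subset.rfl⟩

namespace IsDisjointlyAdditive

theorem iUnion {ι : Type*} (hP : IsDisjointlyAdditive P) {A : ι → Set Z} (hopen : ∀ i, IsOpen (A i))
    (hdisj : Pairwise (Disjoint on A)) (hA : ∀ i, P (A i)) : P (⋃ i, A i) := by
  rw [← sUnion_range]
  exact hP.sUnion (forall_mem_range.2 hopen) hdisj.range_pairwise (forall_mem_range.2 hA)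

theorem openCoverable_iUnion {ι : Type*} (hP : IsDisjointlyAdditive P) {A : ι → Set Z}
    (hopen : ∀ i, IsOpen (A i)) (hdisj : Pairwise (Disjoint on A))
    (hA : ∀ i, OpenCoverable P n (A i)) : OpenCoverable P n (⋃ i, A i) := by
  choose U hUopen hUP hcover using hA
  have hinter (i : ι) (j : Fin n) : IsOpen (A i ∩ U i j) := (hopen i).inter (hUopen i j)
  refine ⟨fun j ↦ ⋃ i, A i ∩ U i j, fun j ↦ isOpen_iUnion fun i ↦ hinter i j, fun j ↦
    hP.iUnion (fun i ↦ hinter i j) ?_ fun i ↦ hP.mono (hUP i j) inter_subset_right, ?_⟩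
  · exact fun i i' hne ↦ (hdisj hne).mono inter_subset_left inter_subset_left
  · intro z hz
    obtain ⟨i, hi⟩ := mem_iUnion.1 hz
    obtain ⟨j, hj⟩ := mem_iUnion.1 (hcover i hi)
    exact mem_iUnion₂.2 ⟨j, i, hi, hj⟩

theorem openCoverable_of_covDimLE [TopologicalSpace.PseudoMetrizableSpace Z]
    (hP : IsDisjointlyAdditive P) {F : Set Z} {m : ℕ} (hF : CovDimLE F m)
    (hlocal : ∀ z ∈ F, ∃ U, IsOpen U ∧ z ∈ U ∧ P U) :
    OpenCoverable P (m + 1) F := by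
  obtain ⟨𝒲, h𝒲, hcover⟩ := hF.exists_disjoint_refinements_of_subset
    (𝒰 := {U | IsOpen U ∧ P U}) (fun U hU ↦ hU.1) fun z hz ↦
      let ⟨U, hopen, hzU, hU⟩ := hlocal z hz
      ⟨U, ⟨hopen, hU⟩, hzU⟩
  refine ⟨fun i ↦ ⋃₀ 𝒲 i, fun i ↦ isOpen_sUnion (h𝒲 i).isOpen, fun i ↦
    hP.sUnion (h𝒲 i).isOpen (h𝒲 i).pairwiseDisjoint fun V hV ↦ ?_, hcover⟩
  obtain ⟨U, hU, hVU⟩ := (h𝒲 i).exists_subset V hV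
  exact hP.mono hU.2 hVU

theorem openCoverable_univ_of_local_preimage [NormalSpace Y] [ParacompactSpace Y]
    (hP : IsDisjointlyAdditive P) {k : ℕ} (hY : CovDimLE Y k) {q : Z → Y} (hq : Continuous q)
    (hlocal : ∀ y, ∃ V, IsOpen V ∧ y ∈ V ∧ OpenCoverable P n (q ⁻¹' V)) :
    OpenCoverable P ((k + 1) * n) univ := by
  obtain ⟨𝒲, h𝒲, hcover⟩ := hY.exists_disjoint_refinements
    (𝒰 := {V | IsOpen V ∧ OpenCoverable P n (q ⁻¹' V)}) (fun V hV ↦ hV.1) <|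
      eq_univ_of_forall fun y ↦
        let ⟨V, hopen, hyV, hV⟩ := hlocal y
        ⟨V, ⟨hopen, hV⟩, hyV⟩
  have hfamily (j : Fin (k + 1)) : OpenCoverable P n (q ⁻¹' ⋃₀ 𝒲 j) := by
    rw [sUnion_eq_iUnion, preimage_iUnion]
    refine hP.openCoverable_iUnion (fun V ↦ ((h𝒲 j).isOpen V V.2).preimage hq)
      (fun V V' hne ↦ ?_) fun V ↦ ?_
    · exact ((h𝒲 j).pairwiseDisjoint V.2 V'.2 (Subtype.coe_ne_coe.2 hne)).preimage q
    · obtain ⟨U, hU, hVU⟩ := (h𝒲 j).exists_subset V V.2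
      exact hU.2.mono (preimage_mono hVU)
  rw [← preimage_univ (f := q), ← hcover, preimage_iUnion]
  exact .iUnion_fin hfamily

theorem openCoverable_univ_of_isClosedMap [TopologicalSpace.PseudoMetrizableSpace Z]
    [ParacompactSpace Y] (hP : IsDisjointlyAdditive P)
    (hlocal : ∀ z, ∃ U, IsOpen U ∧ z ∈ U ∧ P U) {k m : ℕ} (hY : CovDimLE Y k) {q : Z → Y}
    (hcont : Continuous q) (hclosed : IsClosedMap q) (hfib : ∀ y, CovDimLE (q ⁻¹' {y}) m) :
    OpenCoverable P ((k + 1) * (m + 1)) univ := by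
  -- Only the image of `q` inherits normality from `Z`.
  have hemb : IsClosedEmbedding ((↑) : range q → Y) :=
    hclosed.isClosed_range.isClosedEmbedding_subtypeVal
  have hcont' : Continuous (rangeFactorization q) := hcont.subtype_mk _
  have hclosed' : IsClosedMap (rangeFactorization q) := hclosed.subtype_mk _
  have : ParacompactSpace (range q) := hemb.paracompactSpace
  have : NormalSpace (range q) := by
    let _ := TopologicalSpace.pseudoMetrizableSpacePseudoMetric Z
    exact normalSpace_of_isClosedMap_surjective hcont' hclosed' rangeFactorization_surjective
  refine hP.openCoverable_univ_of_local_preimage (hY.of_isClosedEmbedding hemb) hcont' fun y ↦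
    OpenCoverable.exists_isOpen_preimage hclosed' ?_
  have hpreimage : rangeFactorization q ⁻¹' {y} = q ⁻¹' {(y : Y)} := by
    ext z
    exact Subtype.ext_iff
  rw [hpreimage]
  exact hP.openCoverable_of_covDimLE (hfib y) fun z _ ↦ hlocal z

end IsDisjointlyAdditive

end OpenCoverable

section PathSections

variable {X : Type*} [TopologicalSpace X]

theorem isDisjointlyAdditive_pathSecOn : IsDisjointlyAdditive (PathSecOn X) where
  mono := by
    rintro S T ⟨s, hs⟩ hST
    exact ⟨s.comp (.inclusion hST), fun p ↦ hs ⟨p, hST p.2⟩⟩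
  sUnion := by
    intro 𝒲 hopen hdisj hsec
    choose s hs using fun V : 𝒲 ↦ hsec V V.2
    let S (V : 𝒲) : Set (⋃₀ 𝒲) := Subtype.val ⁻¹' (V : Set (X × X))
    let φ (V : 𝒲) : C(S V, C(unitInterval, X)) := (s V).comp ⟨fun p ↦ ⟨p.1.1, p.2⟩, by fun_prop⟩
    have hφ (V W : 𝒲) (p : ⋃₀ 𝒲) (hV : p ∈ S V) (hW : p ∈ S W) : φ V ⟨p, hV⟩ = φ W ⟨p, hW⟩ := by
      obtain rfl : V = W := Subtype.ext (hdisj.elim_set V.2 W.2 p.1 hV hW)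
      rfl
    have hS (p : ⋃₀ 𝒲) : ∃ V, S V ∈ 𝓝 p := by
      obtain ⟨V, hV, hp⟩ := p.2
      exact ⟨⟨V, hV⟩, ((hopen V hV).preimage continuous_subtype_val).mem_nhds hp⟩
    refine ⟨ContinuousMap.liftCover S φ hφ hS, fun p ↦ ?_⟩
    obtain ⟨V, hV⟩ := hS p
    rw [ContinuousMap.liftCover_coe ⟨p, mem_of_mem_nhds hV⟩]
    exact hs V _

theorem pathSecOn_of_homotopic {S : Set (X × X)}
    (h : (ContinuousMap.fst.restrict S).Homotopic (ContinuousMap.snd.restrict S)) :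
    PathSecOn X S := by
  obtain ⟨H⟩ := h
  exact ⟨(H.toContinuousMap.comp .prodSwap).curry, fun p ↦ ⟨H.map_zero_left p, H.map_one_left p⟩⟩

theorem homotopic_of_nullhomotopic {Z : Type*} [TopologicalSpace Z] [PathConnectedSpace X]
    {f g : C(Z, X)} (hf : f.Nullhomotopic) (hg : g.Nullhomotopic) : f.Homotopic g := by
  obtain ⟨a, ha⟩ := hf
  obtain ⟨b, hb⟩ := hg
  obtain ⟨γ⟩ := PathConnectedSpace.joined a b
  exact (ha.trans ⟨γ.toHomotopyConst⟩).trans hb.symm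

theorem pathSecOn_prod [PathConnectedSpace X] {V W : Set X}
    (hV : ((ContinuousMap.id X).restrict V).Nullhomotopic)
    (hW : ((ContinuousMap.id X).restrict W).Nullhomotopic) : PathSecOn X (V ×ˢ W) := by
  let fst : C(V ×ˢ W, V) := ⟨fun p ↦ ⟨p.1.1, p.2.1⟩, by fun_prop⟩
  let snd : C(V ×ˢ W, W) := ⟨fun p ↦ ⟨p.1.2, p.2.2⟩, by fun_prop⟩
  exact pathSecOn_of_homotopic (homotopic_of_nullhomotopic (hV.comp_left fst) (hW.comp_left snd))

variable (X) in
/-- Each point has a neighbourhood whose inclusion into the whole space is null-homotopic. This is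
weaker than `LocallyContractibleSpace`, where the contraction has to take place in a prescribed
neighbourhood. -/
def SemilocallyContractible : Prop :=
  ∀ x : X, ∃ V ∈ 𝓝 x, ((ContinuousMap.id X).restrict V).Nullhomotopic

theorem SemilocallyContractible.exists_isOpen_pathSecOn [PathConnectedSpace X]
    (hX : SemilocallyContractible X) (p : X × X) : ∃ U, IsOpen U ∧ p ∈ U ∧ PathSecOn X U := by
  obtain ⟨V, hV, hVnull⟩ := hX p.1
  obtain ⟨W, hW, hWnull⟩ := hX p.2
  exact ⟨interior (V ×ˢ W), isOpen_interior, mem_interior_iff_mem_nhds.2 (prod_mem_nhds hV hW),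
    isDisjointlyAdditive_pathSecOn.mono (pathSecOn_prod hVnull hWnull) interior_subset⟩

theorem IsENR.metrizableSpace (hX : IsENR X) : TopologicalSpace.MetrizableSpace X := by
  obtain ⟨_, _, _, _, he, -⟩ := hX
  exact he.metrizableSpace

theorem IsENR.semilocallyContractible (hX : IsENR X) : SemilocallyContractible X := by
  intro x
  obtain ⟨N, e, O, r, he, hO, heO, hr, hre⟩ := hX
  obtain ⟨ε, hε, hball⟩ := Metric.isOpen_iff.1 hO (e x) (heO (mem_range_self x))
  let B := Metric.ball (e x) ε
  let ρ : C(O, X) := ⟨fun z ↦ he.toHomeomorph.symm ⟨r z, hr z⟩, by fun_prop⟩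
  have hρ (z : X) : ρ ⟨e z, heO (mem_range_self z)⟩ = z := by
    refine he.toHomeomorph.symm_apply_eq.2 (Subtype.ext ?_)
    exact hre _ (mem_range_self z)
  let toBall : C(e ⁻¹' B, B) := ⟨fun z ↦ ⟨e z, z.2⟩, by have := he.continuous; fun_prop⟩
  have hfactor :
      (ContinuousMap.id X).restrict (e ⁻¹' B) = (ρ.comp (.inclusion hball)).comp toBall :=
    ContinuousMap.ext fun z ↦ (hρ z).symm
  have : ContractibleSpace B :=
    (convex_ball (e x) ε).contractibleSpace ⟨_, Metric.mem_ball_self hε⟩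
  refine ⟨e ⁻¹' B, he.continuous.continuousAt.preimage_mem_nhds (Metric.ball_mem_nhds _ hε), ?_⟩
  rw [hfactor]
  exact ((id_nullhomotopic B).comp_right (ρ.comp (.inclusion hball))).comp_left toBall

theorem OpenCoverable.topComplexity_le {n : ℕ} (h : OpenCoverable (PathSecOn X) n univ) :
    TopComplexity X ≤ n := by
  obtain ⟨U, hopen, hsec, hcover⟩ := h
  exact sInf_le ⟨n, rfl, U, fun i ↦ ⟨U i, hopen i, (inter_univ _).symm⟩, hcover, hsec⟩

end PathSections

theorem topComplexity_le_of_closed_map_dim_general {X Y : Type*} [TopologicalSpace X]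
    [TopologicalSpace Y] [PathConnectedSpace X] [TopologicalSpace.PseudoMetrizableSpace X]
    (hX : SemilocallyContractible X) [ParacompactSpace Y] (k : ℕ) (hY : CovDimLE Y k)
    (q : X × X → Y) (hqcont : Continuous q) (hqclosed : IsClosedMap q)
    (m : ℕ) (hfib : ∀ y : Y, CovDimLE (q ⁻¹' {y}) m) :
    TopComplexity X ≤ (((k + 1) * (m + 1) : ℕ) : ℕ∞) :=
  (isDisjointlyAdditive_pathSecOn.openCoverable_univ_of_isClosedMap hX.exists_isOpen_pathSecOn hY
    hqcont hqclosed hfib).topComplexity_le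

/-- If `X` is a path-connected normal ENR, `Y` is paracompact of covering dimension at
most `k`, and `q : X × X → Y` is a closed continuous map all of whose fibres have
covering dimension at most `m`, then `TC(X) ≤ (k + 1)(m + 1)`. -/
theorem topComplexity_le_of_closed_map_dim {X Y : Type*} [TopologicalSpace X]
    [TopologicalSpace Y] [PathConnectedSpace X] [NormalSpace X] (hX : IsENR X)
    [ParacompactSpace Y] (k : ℕ) (hY : CovDimLE Y k)
    (q : X × X → Y) (hqcont : Continuous q) (hqclosed : IsClosedMap q)
    (m : ℕ) (hfib : ∀ y : Y, CovDimLE (q ⁻¹' {y}) m) :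
    TopComplexity X ≤ (((k + 1) * (m + 1) : ℕ) : ℕ∞) := by
  have := hX.metrizableSpace
  exact topComplexity_le_of_closed_map_dim_general hX.semilocallyContractible k hY q hqcont hqclosed
    m hfib
end
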